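/- For the planar rancher process (x_n), for every n, almost surely E[‖x_{n+1}‖ − ‖x_n‖ | F_n] ≥ 0. -/

import Mathlib

/-!
The reason for the non-negative drift is that the origin lies in the ranch `K`, which is convex.
If a step `v` from `p` is legal and does not point away from the origin (`⟪p, v⟫ ≤ 0`), then so is
its mirror image in `pᗮ`, which is `v + c • p` with `c ≥ 0`: if `p + s • (v + c • p)` were
interior to `K`, then so would be its multiple by `(1 + s * c)⁻¹`, which lies on the original step.
Pairing each inward legal direction with its mirror image shows that the mean legal step has a
non-negative inner product with `p`, so by convexity of the norm the expected distance to the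
origin does not decrease.
-/

open MeasureTheory Filter Real

/-- The unit vector in the plane at angle `θ`. -/
noncomputable def unitDir (θ : ℝ) : EuclideanSpace ℝ (Fin 2) :=
  (WithLp.equiv 2 (Fin 2 → ℝ)).symm ![Real.cos θ, Real.sin θ]

/-- The set of angles `θ ∈ [0, 2π)` such that the unit step from `xₙ` in
direction `θ` does not intersect the interior of the convex hull of
`{x₀, …, xₙ}` (the ranch).  The points `y` at distance `1` from `xₙ` are
exactly the points `xₙ + unitDir θ`, `θ ∈ [0, 2π)`. -/
noncomputable def rancherAngles {Ω : Type*} (x : ℕ → Ω → EuclideanSpace ℝ (Fin 2))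
    (n : ℕ) (ω : Ω) : Set ℝ :=
  {θ : ℝ | θ ∈ Set.Ico 0 (2 * π) ∧
    segment ℝ (x n ω) (x n ω + unitDir θ) ∩
      interior (convexHull ℝ (Set.range fun i : Fin (n + 1) => x i ω)) = ∅}

/-- The normalized arc-length (uniform) measure on the set of allowed
positions for `x_{n+1}`:  the push-forward under `θ ↦ xₙ + unitDir θ` of the
normalized restriction of Lebesgue measure to the allowed angles. -/
noncomputable def rancherStep {Ω : Type*} (x : ℕ → Ω → EuclideanSpace ℝ (Fin 2))
    (n : ℕ) (ω : Ω) : Measure (EuclideanSpace ℝ (Fin 2)) :=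
  (volume (rancherAngles x n ω))⁻¹ •
    (volume.restrict (rancherAngles x n ω)).map fun θ => x n ω + unitDir θ

section StarConvex

open scoped Pointwise

variable {E : Type*} [AddCommGroup E] [Module ℝ E] [TopologicalSpace E] [ContinuousConstSMul ℝ E]
  {K : Set E}

lemma smul_mem_interior_of_starConvex_zero (hK : StarConvex ℝ 0 K) {y : E} (hy : y ∈ interior K)
    {t : ℝ} (ht₀ : 0 < t) (ht₁ : t ≤ 1) : t • y ∈ interior K := by
  have hsub : t • K ⊆ K := Set.smul_set_subset_iff.2 fun x hx =>
    starConvex_zero_iff.1 hK hx ht₀.le ht₁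
  have hty : t • y ∈ interior (t • K) := by
    rw [interior_smul₀ ht₀.ne']
    exact Set.smul_mem_smul_set hy
  exact interior_mono hsub hty

lemma disjoint_segment_add_smul_interior (hK : StarConvex ℝ 0 K) {p v : E} {c : ℝ} (hc : 0 ≤ c)
    (h : Disjoint (segment ℝ p (p + v)) (interior K)) :
    Disjoint (segment ℝ p (p + (v + c • p))) (interior K) := by
  simp only [segment_eq_image', Set.disjoint_left, Set.forall_mem_image,
    add_sub_cancel_left] at h ⊢
  rintro s ⟨hs₀, hs₁⟩ hmem
  have hsc : 0 ≤ s * c := mul_nonneg hs₀ hc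
  have hpos : 0 < 1 + s * c := by linarith
  have hscaled : p + (s / (1 + s * c)) • v = (1 + s * c)⁻¹ • (p + s • (v + c • p)) := by
    match_scalars <;> field_simp
  refine h ⟨div_nonneg hs₀ hpos.le, (div_le_one hpos).2 (by linarith)⟩ ?_
  rw [hscaled]
  exact smul_mem_interior_of_starConvex_zero hK hmem (inv_pos.2 hpos)
    (inv_le_one_of_one_le₀ (by linarith))

lemma isClosed_setOf_disjoint_segment [ContinuousAdd E] [ContinuousSub E] (p : E) {U : Set E}
    (hU : IsOpen U) : IsClosed {q | Disjoint (segment ℝ p q) U} := by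
  simp only [segment_eq_image', Set.disjoint_left, Set.forall_mem_image, Set.ofPred_forall]
  exact isClosed_biInter fun s _ => hU.isClosed_compl.preimage (by fun_prop)

end StarConvex

section InnerProductSpace

open scoped RealInnerProductSpace

variable {E : Type*} [NormedAddCommGroup E] [InnerProductSpace ℝ E]

lemma disjoint_segment_add_reflection_interior {K : Set E} (hK : StarConvex ℝ 0 K) {p v : E}
    (hpv : ⟪p, v⟫ ≤ 0) (h : Disjoint (segment ℝ p (p + v)) (interior K)) :
    Disjoint (segment ℝ p (p + (ℝ ∙ p)ᗮ.reflection v)) (interior K) := by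
  have hrefl : (ℝ ∙ p)ᗮ.reflection v = v + (-(2 * (⟪p, v⟫ / ‖p‖ ^ 2))) • p := by
    rw [Submodule.reflection_orthogonal_apply, Submodule.reflection_singleton_apply]
    simp only [RCLike.ofReal_real_eq_id, id]
    module
  have hcoeff : ⟪p, v⟫ / ‖p‖ ^ 2 ≤ 0 := div_nonpos_of_nonpos_of_nonneg hpv (by positivity)
  rw [hrefl]
  exact disjoint_segment_add_smul_interior hK (by linarith) h

lemma inner_reflection_orthogonal_singleton (p v : E) :
    ⟪p, (ℝ ∙ p)ᗮ.reflection v⟫ = -⟪p, v⟫ := by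
  rw [← Submodule.reflection_symm, ← LinearIsometryEquiv.inner_map_eq_flip,
    Submodule.reflection_orthogonalComplement_singleton_eq_neg, inner_neg_left]

lemma norm_le_integral_norm_of_integral_inner_sub_nonneg {α : Type*} [MeasurableSpace α]
    {ν : Measure α} [IsProbabilityMeasure ν] {f : α → E} (hf : Integrable f ν) {p : E}
    (h : 0 ≤ ∫ a, ⟪p, f a - p⟫ ∂ν) : ‖p‖ ≤ ∫ a, ‖f a‖ ∂ν := by
  rcases eq_or_ne p 0 with rfl | hp
  · rw [norm_zero]
    exact integral_nonneg fun a => norm_nonneg (f a)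
  refine le_of_mul_le_mul_left ?_ (norm_pos_iff.2 hp)
  calc ‖p‖ * ‖p‖ ≤ ∫ a, ⟪p, f a⟫ ∂ν := by
        simp only [inner_sub_right] at h
        rw [integral_sub (hf.const_inner p) (integrable_const _), integral_const, probReal_univ,
          one_smul, real_inner_self_eq_norm_mul_norm] at h
        linarith
    _ ≤ ∫ a, ‖p‖ * ‖f a‖ ∂ν :=
        integral_mono (hf.const_inner p) (hf.norm.const_mul _) fun a => real_inner_le_norm p (f a)
    _ = ‖p‖ * ∫ a, ‖f a‖ ∂ν := integral_const_mul _ _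

end InnerProductSpace

section Reflection

lemma indicator_add_indicator_involutive_nonneg {α : Type*} {σ : α → α}
    (hσ : Function.Involutive σ) {S : Set α} {f : α → ℝ} (hf : ∀ a, f (σ a) = -f a)
    (hS : ∀ a ∈ S, f a ≤ 0 → σ a ∈ S) (a : α) :
    0 ≤ S.indicator f a + S.indicator f (σ a) := by
  by_cases ha : a ∈ S <;> by_cases hσa : σ a ∈ S
  · simp [ha, hσa, hf]
  · have : 0 < f a := not_le.1 fun hle => hσa (hS a ha hle)
    simpa [ha, hσa] using this.le
  · have : 0 < f (σ a) := not_le.1 fun hle => ha (hσ a ▸ hS (σ a) hσa hle)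
    simpa [ha, hσa] using this.le
  · simp [ha, hσa]

lemma intervalIntegral_comp_sub_left_of_periodic {E : Type*} [NormedAddCommGroup E]
    [NormedSpace ℝ E] {f : ℝ → E} {T : ℝ} (hf : Function.Periodic f T) (c : ℝ) :
    ∫ t in (0 : ℝ)..T, f (c - t) = ∫ t in (0 : ℝ)..T, f t := by
  simpa using hf.intervalIntegral_add_eq (c - T) 0

lemma intervalIntegral_nonneg_of_periodic_of_add_comp_sub_left_nonneg {f : ℝ → ℝ} {T : ℝ}
    (hf : Function.Periodic f T) (hT : 0 < T) (hint : IntervalIntegrable f volume 0 T) (c : ℝ)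
    (h : ∀ t, 0 ≤ f t + f (c - t)) : 0 ≤ ∫ t in (0 : ℝ)..T, f t := by
  have hint_reflect : IntervalIntegrable (fun t => f (c - t)) volume 0 T := by
    simpa using (hf.intervalIntegrable₀ hT.ne' hint (c - 0) (c - T)).comp_sub_left c
  have hsum : 0 ≤ ∫ t in (0 : ℝ)..T, (f t + f (c - t)) :=
    intervalIntegral.integral_nonneg hT.le fun t _ => h t
  rw [intervalIntegral.integral_add hint hint_reflect,
    intervalIntegral_comp_sub_left_of_periodic hf] at hsum
  linarith

end Reflection

section UnitDir

lemma unitDir_apply_zero (θ : ℝ) : unitDir θ 0 = Real.cos θ := rfl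

lemma unitDir_apply_one (θ : ℝ) : unitDir θ 1 = Real.sin θ := rfl

lemma continuous_unitDir : Continuous unitDir := by
  refine (PiLp.continuous_toLp 2 (fun _ : Fin 2 => ℝ)).comp (continuous_pi fun i => ?_)
  fin_cases i
  exacts [Real.continuous_cos, Real.continuous_sin]

lemma norm_unitDir (θ : ℝ) : ‖unitDir θ‖ = 1 := by
  simp [EuclideanSpace.norm_eq, Fin.sum_univ_two, unitDir_apply_zero, unitDir_apply_one]

lemma inner_unitDir (θ φ : ℝ) : inner ℝ (unitDir θ) (unitDir φ) = Real.cos (θ - φ) := by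
  simp only [PiLp.inner_apply, Fin.sum_univ_two, unitDir_apply_zero, unitDir_apply_one,
    RCLike.inner_apply, conj_trivial, Real.cos_sub]
  ring

lemma unitDir_periodic : Function.Periodic unitDir (2 * π) := fun θ => by
  simp [unitDir]

lemma unitDir_pi_add_two_mul_sub (φ θ : ℝ) :
    unitDir (π + 2 * φ - θ) = (ℝ ∙ unitDir φ)ᗮ.reflection (unitDir θ) := by
  obtain ⟨α, rfl⟩ : ∃ α, θ = α + φ := ⟨θ - φ, (sub_add_cancel θ φ).symm⟩
  have hangle : π + 2 * φ - (α + φ) = π - (α - φ) := by ring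
  have hrefl : (ℝ ∙ unitDir φ)ᗮ.reflection (unitDir (α + φ)) =
      unitDir (α + φ) - (2 * Real.cos α) • unitDir φ := by
    rw [Submodule.reflection_orthogonal_apply, Submodule.reflection_singleton_apply, norm_unitDir,
      real_inner_comm, inner_unitDir, add_sub_cancel_right, RCLike.ofReal_one, one_pow, div_one]
    module
  rw [hangle, hrefl]
  refine PiLp.ext (Fin.forall_fin_two.2 ⟨?_, ?_⟩)
  · rw [PiLp.sub_apply, PiLp.smul_apply]
    simp only [unitDir_apply_zero, smul_eq_mul]
    rw [Real.cos_pi_sub, Real.cos_sub, Real.cos_add]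
    ring
  · rw [PiLp.sub_apply, PiLp.smul_apply]
    simp only [unitDir_apply_one, smul_eq_mul]
    rw [Real.sin_pi_sub, Real.sin_sub, Real.sin_add]
    ring

lemma exists_eq_norm_smul_unitDir (p : EuclideanSpace ℝ (Fin 2)) :
    ∃ φ : ℝ, p = ‖p‖ • unitDir φ := by
  set z : ℂ := ⟨p 0, p 1⟩ with hz
  have hnorm : ‖z‖ = ‖p‖ := by
    rw [EuclideanSpace.norm_eq, Fin.sum_univ_two, Complex.norm_eq_sqrt_sq_add_sq]
    simp [hz]
  refine ⟨z.arg, ?_⟩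
  ext i
  fin_cases i
  · simp [unitDir_apply_zero, ← hnorm, hz, Complex.norm_mul_cos_arg]
  · simp [unitDir_apply_one, ← hnorm, hz, Complex.norm_mul_sin_arg]

lemma exists_unitDir_sub_eq_reflection {p : EuclideanSpace ℝ (Fin 2)} (hp : p ≠ 0) :
    ∃ c : ℝ, ∀ θ, unitDir (c - θ) = (ℝ ∙ p)ᗮ.reflection (unitDir θ) := by
  obtain ⟨φ, hφ⟩ := exists_eq_norm_smul_unitDir p
  have hspan : (ℝ ∙ p) = ℝ ∙ unitDir φ := by
    rw [hφ, Submodule.span_singleton_smul_eq (norm_ne_zero_iff.2 hp).isUnit]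
  refine ⟨π + 2 * φ, fun θ => ?_⟩
  rw [unitDir_pi_add_two_mul_sub]
  simp only [hspan]

end UnitDir

/-- The angles `θ`, not reduced modulo `2π`, such that the unit step from `p` in direction `θ`
avoids the interior of `K`. -/
def legalAngles (K : Set (EuclideanSpace ℝ (Fin 2))) (p : EuclideanSpace ℝ (Fin 2)) : Set ℝ :=
  {θ | Disjoint (segment ℝ p (p + unitDir θ)) (interior K)}

section LegalAngles

open scoped RealInnerProductSpace

variable {K : Set (EuclideanSpace ℝ (Fin 2))} {p : EuclideanSpace ℝ (Fin 2)}

lemma isClosed_legalAngles : IsClosed (legalAngles K p) :=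
  (isClosed_setOf_disjoint_segment p isOpen_interior).preimage
    (continuous_const.add continuous_unitDir)

lemma add_two_pi_mem_legalAngles_iff {θ : ℝ} :
    θ + 2 * π ∈ legalAngles K p ↔ θ ∈ legalAngles K p := by
  simp only [legalAngles, Set.mem_ofPred_eq, unitDir_periodic θ]

lemma periodic_indicator_legalAngles_inner_unitDir :
    Function.Periodic ((legalAngles K p).indicator fun θ => ⟪p, unitDir θ⟫) (2 * π) := fun θ => by
  classical
  simp only [Set.indicator_apply, add_two_pi_mem_legalAngles_iff, unitDir_periodic θ]

lemma setIntegral_legalAngles_inner_unitDir_nonneg (hK : StarConvex ℝ 0 K)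
    (p : EuclideanSpace ℝ (Fin 2)) :
    0 ≤ ∫ θ in Set.Ico 0 (2 * π) ∩ legalAngles K p, ⟪p, unitDir θ⟫ := by
  rcases eq_or_ne p 0 with rfl | hp
  · simp
  obtain ⟨c, hc⟩ := exists_unitDir_sub_eq_reflection hp
  have hmeas : MeasurableSet (legalAngles K p) := isClosed_legalAngles.measurableSet
  have hint : IntervalIntegrable ((legalAngles K p).indicator fun θ => ⟪p, unitDir θ⟫)
      volume 0 (2 * π) := by
    have hcont : Continuous fun θ => ⟪p, unitDir θ⟫ := continuous_const.inner continuous_unitDir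
    rw [intervalIntegrable_iff]
    exact (intervalIntegrable_iff.1 (hcont.intervalIntegrable _ _)).indicator hmeas
  rw [← setIntegral_indicator hmeas, integral_Ico_eq_integral_Ioc,
    ← intervalIntegral.integral_of_le two_pi_pos.le]
  refine intervalIntegral_nonneg_of_periodic_of_add_comp_sub_left_nonneg
    periodic_indicator_legalAngles_inner_unitDir two_pi_pos hint c
    (indicator_add_indicator_involutive_nonneg (sub_sub_cancel c) (fun θ => ?_) fun θ hθ hle => ?_)
  · rw [hc, inner_reflection_orthogonal_singleton]
  · rw [legalAngles, Set.mem_ofPred_eq, hc]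
    exact disjoint_segment_add_reflection_interior hK hle hθ

end LegalAngles

section RancherStep

variable {Ω : Type*} {x : ℕ → Ω → EuclideanSpace ℝ (Fin 2)} {n : ℕ} {ω : Ω}

lemma rancherAngles_eq_inter_legalAngles : rancherAngles x n ω = Set.Ico 0 (2 * π) ∩
    legalAngles (convexHull ℝ (Set.range fun i : Fin (n + 1) => x i ω)) (x n ω) := by
  simp only [rancherAngles, legalAngles, Set.disjoint_iff_inter_eq_empty]
  rfl

lemma measurable_add_unitDir (p : EuclideanSpace ℝ (Fin 2)) :
    Measurable fun θ => p + unitDir θ :=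
  (continuous_const.add continuous_unitDir).measurable

lemma integral_rancherStep {F : Type*} [NormedAddCommGroup F] [NormedSpace ℝ F]
    {g : EuclideanSpace ℝ (Fin 2) → F} (hg : StronglyMeasurable g) :
    ∫ y, g y ∂(rancherStep x n ω) = (volume.real (rancherAngles x n ω))⁻¹ •
      ∫ θ in rancherAngles x n ω, g (x n ω + unitDir θ) := by
  rw [rancherStep, integral_smul_measure,
    integral_map (measurable_add_unitDir _).aemeasurable hg.aestronglyMeasurable,
    ENNReal.toReal_inv, Measure.real]

lemma ae_rancherStep_norm_le : ∀ᵐ y ∂(rancherStep x n ω), ‖y‖ ≤ ‖x n ω‖ + 1 := by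
  refine Measure.ae_smul_measure ?_ _
  rw [ae_map_iff (measurable_add_unitDir _).aemeasurable
    (measurableSet_le measurable_norm measurable_const)]
  refine ae_of_all _ fun θ => ?_
  simpa only [norm_unitDir] using norm_add_le (x n ω) (unitDir θ)

lemma norm_le_integral_norm_rancherStep [IsProbabilityMeasure (rancherStep x n ω)]
    (h0 : x 0 ω = 0) : ‖x n ω‖ ≤ ∫ y, ‖y‖ ∂(rancherStep x n ω) := by
  have hint : Integrable (fun y => y) (rancherStep x n ω) :=
    Integrable.of_bound aestronglyMeasurable_id _ ae_rancherStep_norm_le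
  have hstar : StarConvex ℝ 0 (convexHull ℝ (Set.range fun i : Fin (n + 1) => x i ω)) :=
    (convex_convexHull ℝ _).starConvex (subset_convexHull ℝ _ ⟨0, h0⟩)
  refine norm_le_integral_norm_of_integral_inner_sub_nonneg hint ?_
  rw [integral_rancherStep (by fun_prop), rancherAngles_eq_inter_legalAngles]
  simp only [add_sub_cancel_left]
  exact smul_nonneg (inv_nonneg.2 measureReal_nonneg)
    (setIntegral_legalAngles_inner_unitDir_nonneg hstar _)

end RancherStep

/-- The conditional law of `X` given `m` is `κ`, expressed by testing against measurable functions
bounded by `1`. Neither the measurability of `κ` nor the fact that `κ ω` is a probability measure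
is part of the definition. -/
def HasCondLaw {Ω E : Type*} [MeasurableSpace E] (X : Ω → E) (m : MeasurableSpace Ω)
    {_ : MeasurableSpace Ω} (κ : Ω → Measure E) (μ : Measure Ω) : Prop :=
  ∀ g : E → ℝ, Measurable g → (∀ y, |g y| ≤ 1) →
    μ[fun ω => g (X ω) | m] =ᵐ[μ] fun ω => ∫ y, g y ∂(κ ω)

namespace HasCondLaw

variable {Ω E : Type*} [MeasurableSpace E] {m m0 : MeasurableSpace Ω} {μ : Measure Ω}
  [IsFiniteMeasure μ] {X : Ω → E} {κ : Ω → Measure E}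

lemma ae_isProbabilityMeasure (h : HasCondLaw X m κ μ) (hm : m ≤ m0) :
    ∀ᵐ ω ∂μ, IsProbabilityMeasure (κ ω) := by
  have hone := h (fun _ => 1) measurable_const (by simp)
  rw [condExp_const hm] at hone
  filter_upwards [hone] with ω hω
  rw [integral_const, smul_eq_mul, mul_one] at hω
  exact ⟨(ENNReal.toReal_eq_one_iff _).1 hω.symm⟩

lemma ae_mem (h : HasCondLaw X m κ μ) (hm : m ≤ m0) (hX : Measurable X) {A : Set E}
    (hA : MeasurableSet A) (hκ : ∀ᵐ ω ∂μ, ∀ᵐ y ∂(κ ω), y ∈ A) : ∀ᵐ ω ∂μ, X ω ∈ A := by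
  have hcondExp : μ[fun ω => Aᶜ.indicator 1 (X ω) | m] =ᵐ[μ] fun _ => (0 : ℝ) := by
    refine (h (Aᶜ.indicator 1) (measurable_one.indicator hA.compl) fun y => ?_).trans ?_
    · by_cases hy : y ∈ A <;> simp [hy]
    · filter_upwards [hκ] with ω hω
      rw [integral_indicator_one hA.compl, Measure.real, show κ ω Aᶜ = 0 from hω,
        ENNReal.toReal_zero]
  have hzero : ∫ ω, (X ⁻¹' Aᶜ).indicator (1 : Ω → ℝ) ω ∂μ = 0 := by
    have := integral_congr_ae hcondExp
    rwa [integral_condExp hm, integral_zero] at this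
  rw [integral_indicator_one (hX hA.compl), measureReal_eq_zero_iff] at hzero
  exact hzero

lemma condExp_comp_ae_eq (h : HasCondLaw X m κ μ) (hm : m ≤ m0) (hX : Measurable X) {g : E → ℝ}
    (hg : Measurable g) {C : ℝ} (hκ : ∀ᵐ ω ∂μ, ∀ᵐ y ∂(κ ω), |g y| ≤ C) :
    μ[fun ω => g (X ω) | m] =ᵐ[μ] fun ω => ∫ y, g y ∂(κ ω) := by
  set A : Set E := {y | |g y| ≤ C}
  have hA : MeasurableSet A := measurableSet_le hg.abs measurable_const
  have hD : 0 < |C| + 1 := by positivity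
  set f : E → ℝ := A.indicator fun y => (|C| + 1)⁻¹ * g y with hf
  have hf_le (y : E) : |f y| ≤ 1 := by
    by_cases hy : y ∈ A
    · rw [hf, Set.indicator_of_mem hy, abs_mul, abs_of_pos (inv_pos.2 hD), inv_mul_le_one₀ hD]
      linarith [show |g y| ≤ C from hy, le_abs_self C]
    · simp [hf, hy]
  have hgf {y : E} (hy : y ∈ A) : g y = (|C| + 1) * f y := by
    rw [hf, Set.indicator_of_mem hy, mul_inv_cancel_left₀ hD.ne']
  have hcomp : (fun ω => g (X ω)) =ᵐ[μ] (|C| + 1) • fun ω => f (X ω) := by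
    filter_upwards [h.ae_mem hm hX hA hκ] with ω hω using hgf hω
  filter_upwards [condExp_congr_ae hcomp, condExp_smul (|C| + 1) (fun ω => f (X ω)) m,
    h f ((hg.const_mul _).indicator hA) hf_le, hκ] with ω h₁ h₂ h₃ hω
  rw [h₁, h₂, Pi.smul_apply, h₃, smul_eq_mul, ← integral_const_mul]
  exact integral_congr_ae (hω.mono fun y hy => (hgf hy).symm)

end HasCondLaw

lemma stronglyAdapted_of_iSup_comap_le {Ω E : Type*} {m0 : MeasurableSpace Ω}
    [TopologicalSpace E] [TopologicalSpace.PseudoMetrizableSpace E] [SecondCountableTopology E]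
    [mE : MeasurableSpace E] [OpensMeasurableSpace E] {ℱ : Filtration ℕ m0} {x : ℕ → Ω → E}
    (h : ∀ n, ⨆ i : Fin (n + 1), mE.comap (x i) ≤ ℱ n) : StronglyAdapted ℱ x := fun n =>
  have hxn : Measurable[ℱ n] (x n) := (comap_measurable (x n)).mono
    ((le_iSup (fun i : Fin (n + 1) => mE.comap (x i)) (Fin.last n)).trans (h n)) le_rfl
  hxn.stronglyMeasurable

section RancherProcess

variable {Ω : Type*} {m0 : MeasurableSpace Ω} {μ : Measure Ω} [IsFiniteMeasure μ]
  {ℱ : Filtration ℕ m0} {x : ℕ → Ω → EuclideanSpace ℝ (Fin 2)}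

lemma ae_norm_le_natCast_of_hasCondLaw_rancherStep (hx : ∀ n, Measurable (x n))
    (hx0 : ∀ᵐ ω ∂μ, x 0 ω = 0)
    (hlaw : ∀ n, HasCondLaw (x (n + 1)) (ℱ n) (rancherStep x n) μ) (n : ℕ) :
    ∀ᵐ ω ∂μ, ‖x n ω‖ ≤ n := by
  induction n with
  | zero => filter_upwards [hx0] with ω hω using by simp [hω]
  | succ n ih =>
    refine (hlaw n).ae_mem (ℱ.le n) (hx (n + 1))
      (measurableSet_le measurable_norm measurable_const) ?_
    filter_upwards [ih] with ω hω
    filter_upwards [ae_rancherStep_norm_le] with y hy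
    push_cast
    linarith

theorem rancher_expected_radial_gain_nonneg_general (hx : StronglyAdapted ℱ x)
    (hx0 : ∀ᵐ ω ∂μ, x 0 ω = 0)
    (hlaw : ∀ n, HasCondLaw (x (n + 1)) (ℱ n) (rancherStep x n) μ) :
    Submartingale (fun n ω => ‖x n ω‖) ℱ μ := by
  have hmeas (n : ℕ) : Measurable (x n) := ((hx n).mono (ℱ.le n)).measurable
  have hbound := ae_norm_le_natCast_of_hasCondLaw_rancherStep hmeas hx0 hlaw
  have hint (n : ℕ) : Integrable (fun ω => ‖x n ω‖) μ :=
    Integrable.of_bound (hmeas n).norm.aestronglyMeasurable n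
      (by simpa only [norm_norm] using hbound n)
  have hcondExp (n : ℕ) : μ[fun ω => ‖x (n + 1) ω‖ | ℱ n] =ᵐ[μ]
      fun ω => ∫ y, ‖y‖ ∂(rancherStep x n ω) := by
    refine (hlaw n).condExp_comp_ae_eq (ℱ.le n) (hmeas (n + 1)) measurable_norm (C := n + 1) ?_
    filter_upwards [hbound n] with ω hω
    filter_upwards [ae_rancherStep_norm_le] with y hy
    rw [abs_norm]
    linarith
  refine submartingale_nat (fun n => (hx n).norm) hint fun n => ?_
  filter_upwards [hcondExp n, (hlaw n).ae_isProbabilityMeasure (ℱ.le n), hx0] with ω hω hprob h0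
  rw [hω]
  exact norm_le_integral_norm_rancherStep h0

end RancherProcess

/-- For the planar rancher process, for every `n`, almost surely
`E[‖x_{n+1}‖ - ‖xₙ‖ | ℱ n] ≥ 0`.

The rancher process is described by: a filtration `ℱ` with `ℱ n` generated by
`x₀, …, xₙ`; the starting point `x₀ = 0`; and the requirement that the
conditional law of `x_{n+1}` given `ℱ n` is the uniform measure on the allowed
arcs, expressed by the condition that for every bounded measurable test
function `g`, the conditional expectation of `g (x_{n+1})` given `ℱ n` is
a.s. the integral of `g` against `rancherStep x n ω`. -/
theorem rancher_expected_radial_gain_nonneg {Ω : Type*} {m0 : MeasurableSpace Ω}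
    {μ : Measure Ω} [IsProbabilityMeasure μ] (ℱ : Filtration ℕ m0)
    (x : ℕ → Ω → EuclideanSpace ℝ (Fin 2))
    (hx : ∀ n, Measurable (x n))
    (hfilt : ∀ n, (ℱ n : MeasurableSpace Ω) =
      ⨆ i : Fin (n + 1), MeasurableSpace.comap (x i)
        (inferInstance : MeasurableSpace (EuclideanSpace ℝ (Fin 2))))
    (hx0 : ∀ ω, x 0 ω = 0)
    (hcond : ∀ (n : ℕ) (g : EuclideanSpace ℝ (Fin 2) → ℝ), Measurable g →
      (∀ y, |g y| ≤ 1) →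
      (μ[fun ω => g (x (n + 1) ω) | ℱ n] =ᵐ[μ]
        fun ω => ∫ y, g y ∂(rancherStep x n ω))) :
    ∀ n : ℕ, ∀ᵐ ω ∂μ,
      0 ≤ (μ[fun ω => ‖x (n + 1) ω‖ - ‖x n ω‖ | ℱ n]) ω := by
  exact fun n => (rancher_expected_radial_gain_nonneg_general
    (stronglyAdapted_of_iSup_comap_le fun k => (hfilt k).ge) (ae_of_all μ hx0)
    hcond).condExp_sub_nonneg n.le_succ
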